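/- Translation invariance of the constructed approximation (odd case): Under the hypotheses that M = 2K + 1, λ_0 > 0, λ_1, …, λ_K > 0, the Gram matrix G of atoms a(θ_1), …, a(θ_M) ∈ H is invertible and G(l, j) = λ_0 + Σ_{k=1}^K λ_k cos(⟨ω_k, θ_l − θ_j⟩) for all l, j, the approximation h(θ) = Σ_{m=1}^M c_m(θ) v_m with c_m(θ) = λ_0 + Σ_{k=1}^K λ_k cos(⟨ω_k, θ − θ_m⟩) and v_m = Σ_{j=1}^M G⁻¹(m, j) a(θ_j) is translation invariant: ⟨h(θ), h(θ')⟩ = ⟨h(θ − τ), h(θ' − τ)⟩ for all θ, θ', τ ∈ ℝ^D. -/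

import Mathlib

open RealInnerProductSpace

/-!
The vectors dual to `u` have Gram matrix `G⁻¹`, so `⟪h t, h t'⟫ = c(t)ᵀ G⁻¹ c(t')`, where `G` and
`c` are both sampled from one kernel `κ`. The addition formula for the cosine writes `κ` as a sum of
`2K + 1` products of functions of one variable, so `G = F B` with *square* factors that are
therefore invertible, and `c(t)ᵀ G⁻¹ c(t') = p(t)ᵀ B (F B)⁻¹ F q(t') = p(t)ᵀ q(t') = κ t t'`.
Thus `h` reproduces `κ` exactly, and `κ` depends only on the difference of its arguments.
-/

open scoped Matrix

open Matrix (gram)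

section Factorization

variable {n s R : Type*} [Fintype n] [DecidableEq n] [Fintype s] [CommRing R]

theorem mul_nonsing_inv_mul_eq_one_of_card_eq [DecidableEq s]
    (hcard : Fintype.card n = Fintype.card s) (F : Matrix n s R) (B : Matrix s n R)
    (hFB : IsUnit (F * B)) : B * (F * B)⁻¹ * F = 1 := by
  refine (Matrix.mul_eq_one_comm_of_card_eq _ _ _ hcard).1 ?_
  rw [← Matrix.mul_assoc, Matrix.mul_nonsing_inv _ ((Matrix.isUnit_iff_isUnit_det _).1 hFB)]

theorem kernel_dotProduct_inv_mulVec_kernel {X Y : Type*}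
    (hcard : Fintype.card n = Fintype.card s) {κ : X → Y → R} (p : X → s → R) (q : Y → s → R)
    (hκ : ∀ a b, κ a b = p a ⬝ᵥ q b) (x : n → X) (y : n → Y)
    (hG : IsUnit (Matrix.of fun l j ↦ κ (x l) (y j))) (a : X) (b : Y) :
    (fun j ↦ κ a (y j)) ⬝ᵥ ((Matrix.of fun l j ↦ κ (x l) (y j))⁻¹ *ᵥ fun l ↦ κ (x l) b) =
      κ a b := by
  classical
  let F : Matrix n s R := Matrix.of fun l ↦ p (x l)
  let B : Matrix s n R := (Matrix.of fun j ↦ q (y j))ᵀ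
  have hFB : (Matrix.of fun l j ↦ κ (x l) (y j)) = F * B := by
    ext l j
    exact hκ (x l) (y j)
  have hleft : (fun j ↦ κ a (y j)) = p a ᵥ* B := funext fun j ↦ hκ a (y j)
  have hright : (fun l ↦ κ (x l) b) = F *ᵥ q b := funext fun l ↦ hκ (x l) b
  rw [hFB] at hG
  rw [hFB, hleft, hright, ← Matrix.dotProduct_mulVec, Matrix.mulVec_mulVec, Matrix.mulVec_mulVec,
    mul_nonsing_inv_mul_eq_one_of_card_eq hcard F B hG, Matrix.one_mulVec, hκ]

end Factorization

section DualFamily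

variable {𝕜 H n : Type*} [RCLike 𝕜] [SeminormedAddCommGroup H] [InnerProductSpace 𝕜 H]
  [Fintype n] [DecidableEq n]

variable (𝕜) in
/-- The family in the span of `u` that is biorthogonal to `u`, when the Gram matrix of `u` is
invertible. The index order of the inverse matters only over the complex numbers, where the
opposite one would give the conjugate coefficients. -/
noncomputable def dualFamily (u : n → H) (m : n) : H :=
  ∑ j, (gram 𝕜 u)⁻¹ j m • u j

theorem gram_dualFamily {u : n → H} (hu : IsUnit (gram 𝕜 u)) :
    gram 𝕜 (dualFamily 𝕜 u) = (gram 𝕜 u)⁻¹ := by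
  have hherm : ((gram 𝕜 u)⁻¹)ᴴ = (gram 𝕜 u)⁻¹ := (Matrix.isHermitian_gram 𝕜 u).inv
  calc gram 𝕜 (dualFamily 𝕜 u)
      = ((gram 𝕜 u)⁻¹)ᴴ * (gram 𝕜 u * (gram 𝕜 u)⁻¹) := by
        ext m p
        exact (Matrix.star_dotProduct_gram_mulVec u _ _).symm
    _ = (gram 𝕜 u)⁻¹ := by
        rw [Matrix.mul_nonsing_inv _ ((Matrix.isUnit_iff_isUnit_det _).1 hu), Matrix.mul_one, hherm]

theorem dualFamily_real {H : Type*} [SeminormedAddCommGroup H] [InnerProductSpace ℝ H]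
    (u : n → H) (m : n) : dualFamily ℝ u m = ∑ j, (gram ℝ u)⁻¹ m j • u j :=
  Finset.sum_congr rfl fun j _ ↦ by
    rw [← (Matrix.isHermitian_gram ℝ u).inv.apply m j, star_trivial]

/-- The low-rank approximation, along the dual family of `u`, of a feature map whose kernel is `κ`:
`u m` plays the role of the feature of the sample point `x m`. -/
noncomputable def kernelApprox {X : Type*} (κ : X → X → 𝕜) (u : n → H) (x : n → X) (t : X) : H :=
  ∑ m, κ (x m) t • dualFamily 𝕜 u m

theorem inner_kernelApprox {X s : Type*} [Fintype s] (hcard : Fintype.card n = Fintype.card s)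
    {κ : X → X → 𝕜} (hherm : ∀ a b, star (κ a b) = κ b a) (p q : X → s → 𝕜)
    (hκ : ∀ a b, κ a b = p a ⬝ᵥ q b) {u : n → H} (hu : IsUnit (gram 𝕜 u)) {x : n → X}
    (hgram : gram 𝕜 u = Matrix.of fun l j ↦ κ (x l) (x j)) (t t' : X) :
    inner 𝕜 (kernelApprox κ u x t) (kernelApprox κ u x t') = κ t t' := by
  have hstar : star (fun m ↦ κ (x m) t) = fun m ↦ κ t (x m) := funext fun m ↦ hherm (x m) t
  unfold kernelApprox
  rw [← Matrix.star_dotProduct_gram_mulVec, gram_dualFamily hu, hstar, hgram]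
  exact kernel_dotProduct_inv_mulVec_kernel hcard p q hκ x x (hgram ▸ hu) t t'

end DualFamily

section RaisedCosine

variable {ι E : Type*} [AddGroup E] (φ : ι → E →+ ℝ)

/-- The vector with entries `c₀`, `c k cos (φ k t)` and `c k sin (φ k t)`, whose dot
products give the raised-cosine kernel by the addition formula for the cosine. -/
noncomputable def trigFeature (c₀ : ℝ) (c : ι → ℝ) (t : E) : Unit ⊕ ι ⊕ ι → ℝ :=
  Sum.elim (fun _ ↦ c₀) (Sum.elim (fun k ↦ c k * Real.cos (φ k t)) fun k ↦ c k * Real.sin (φ k t))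

variable [Fintype ι] (lam0 : ℝ) (lam : ι → ℝ)

/-- The kernel `λ₀ + ∑ k, λ k cos (φ k (s - t))`, with arbitrary additive maps `φ k` in place of the
phases `⟪ω k, ·⟫`. -/
noncomputable def raisedCosineKernel (s t : E) : ℝ :=
  lam0 + ∑ k, lam k * Real.cos (φ k (s - t))

theorem raisedCosineKernel_comm (s t : E) :
    raisedCosineKernel φ lam0 lam s t = raisedCosineKernel φ lam0 lam t s := by
  simp only [raisedCosineKernel, ← Real.cos_neg (φ _ (s - t)), ← map_neg, neg_sub]

theorem raisedCosineKernel_sub_sub (s t τ : E) :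
    raisedCosineKernel φ lam0 lam (s - τ) (t - τ) = raisedCosineKernel φ lam0 lam s t := by
  simp only [raisedCosineKernel, sub_sub_sub_cancel_right]

theorem raisedCosineKernel_eq_dotProduct (s t : E) :
    raisedCosineKernel φ lam0 lam s t =
      trigFeature φ 1 1 s ⬝ᵥ trigFeature φ lam0 lam t := by
  simp only [raisedCosineKernel, trigFeature, dotProduct, Fintype.sum_sum_type, Sum.elim_inl,
    Sum.elim_inr, Finset.univ_unique, Finset.sum_singleton, Pi.one_apply, one_mul, map_sub,
    Real.cos_sub, ← Finset.sum_add_distrib, add_right_inj]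
  exact Finset.sum_congr rfl fun k _ ↦ by ring

theorem lowrank_translation_invariant_odd_general {H n : Type*} [SeminormedAddCommGroup H]
    [InnerProductSpace ℝ H] [Fintype n] [DecidableEq n]
    (hcard : Fintype.card n = 2 * Fintype.card ι + 1) {u : n → H} (hu : IsUnit (gram ℝ u))
    (θ : n → E) (hgram : ∀ l j, ⟪u l, u j⟫ = raisedCosineKernel φ lam0 lam (θ l) (θ j))
    (t t' τ : E) :
    ⟪kernelApprox (raisedCosineKernel φ lam0 lam) u θ t,
      kernelApprox (raisedCosineKernel φ lam0 lam) u θ t'⟫ =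
    ⟪kernelApprox (raisedCosineKernel φ lam0 lam) u θ (t - τ),
      kernelApprox (raisedCosineKernel φ lam0 lam) u θ (t' - τ)⟫ := by
  have hcard_features : Fintype.card n = Fintype.card (Unit ⊕ ι ⊕ ι) := by
    simp only [hcard, Fintype.card_sum, Fintype.card_unit]
    ring
  have hkernel := inner_kernelApprox hcard_features
    (fun a b ↦ (star_trivial _).trans (raisedCosineKernel_comm φ lam0 lam a b))
    (trigFeature φ 1 1) (trigFeature φ lam0 lam) (raisedCosineKernel_eq_dotProduct φ lam0 lam)
    hu (Matrix.ext hgram)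
  rw [hkernel, hkernel, raisedCosineKernel_sub_sub]

end RaisedCosine

/-- **Translation invariance of the constructed approximation (odd case `M = 2K+1`).**
Under the raised-cosine decomposition of an invertible Gram matrix (with `λ₀ > 0`,
`λ_k > 0`), the constructed low-rank approximation `h θ = ∑ m, c m θ • v m` is
translation invariant. -/
theorem lowrank_translation_invariant_odd
    {H : Type*} [NormedAddCommGroup H] [InnerProductSpace ℝ H]
    {D : ℕ} (hD : 1 ≤ D) {K : ℕ}
    (a : EuclideanSpace ℝ (Fin D) → H)
    (θ : Fin (2 * K + 1) → EuclideanSpace ℝ (Fin D))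
    (lam0 : ℝ) (hlam0 : 0 < lam0)
    (lam : Fin K → ℝ) (hlam : ∀ k, 0 < lam k)
    (ω : Fin K → EuclideanSpace ℝ (Fin D))
    (G : Matrix (Fin (2 * K + 1)) (Fin (2 * K + 1)) ℝ)
    (hG : ∀ l j, G l j = ⟪a (θ l), a (θ j)⟫)
    (hGinv : Invertible G)
    (hdecomp : ∀ l j, G l j = lam0 + ∑ k : Fin K, lam k * Real.cos ⟪ω k, θ l - θ j⟫)
    (c : Fin (2 * K + 1) → EuclideanSpace ℝ (Fin D) → ℝ)
    (hc : ∀ m t, c m t = lam0 + ∑ k : Fin K, lam k * Real.cos ⟪ω k, t - θ m⟫)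
    (v : Fin (2 * K + 1) → H)
    (hv : ∀ m, v m = ∑ j : Fin (2 * K + 1), G⁻¹ m j • a (θ j))
    (h : EuclideanSpace ℝ (Fin D) → H)
    (hh : ∀ t, h t = ∑ m : Fin (2 * K + 1), c m t • v m) :
    ∀ t t' τ : EuclideanSpace ℝ (Fin D), ⟪h t, h t'⟫ = ⟪h (t - τ), h (t' - τ)⟫ := by
  obtain rfl : G = gram ℝ fun m ↦ a (θ m) := Matrix.ext hG
  let φ (k : Fin K) : EuclideanSpace ℝ (Fin D) →+ ℝ := (innerₗ _ (ω k)).toAddMonoidHom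
  obtain rfl : h = kernelApprox (raisedCosineKernel φ lam0 lam) (fun m ↦ a (θ m)) θ := by
    ext1 t
    simp only [hh, hc, hv, kernelApprox, dualFamily_real, raisedCosineKernel_comm φ lam0 lam _ t]
    rfl
  exact lowrank_translation_invariant_odd_general φ lam0 lam (by simp)
    (isUnit_of_invertible _) θ hdecomp
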